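/- arXiv:1801.08229 — 3 statements merged into one kernel-verified Lean document; each statement's English description precedes it below -/
import Mathlib

section
/- There exists a constant C > 0 depending only on n such that, for every abstract Monge–Ampère pairing setup (W, B, 𝟙, F) as in the context, every choice of reference element φ_ref ∈ F, and all φ₁, φ₂, ψ₁, ψ₂ ∈ F: B(ψ₁−ψ₂, φ₁, …, φ₁) − B(ψ₁−ψ₂, φ₂, …, φ₂) ≤ C · I(ψ₁, ψ₂)^{1/2ⁿ} · I(φ₁, φ₂)^{1/2ⁿ} · M^{1 − 1/2^{n−1}}, where φᵢ fills the last n slots and M := max{J(φ₁), J(φ₂), J(ψ₁), J(ψ₂)} (i.e., ∫(ψ₁−ψ₂)(MA(φ₁) − MA(φ₂)) ≤ C·I(ψ₁,ψ₂)^{1/2ⁿ}·I(φ₁,φ₂)^{1/2ⁿ}·M^{1−1/2^{n−1}}). -/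
open Finset

/-- Abstract Monge–Ampère pairing setup with `n = m + 1`: a symmetric multilinear
form `B` on `W^(n+1) = W^(m+2)`, a unit element `one`, and a nonempty convex set
`F ⊆ W`, satisfying (i) normalization `B(𝟙, φ₁, …, φₙ) = 1`, (ii) integration by
parts `B(u, 𝟙, g₂, …, gₙ) = 0` for `u ∈ W₀` and `gᵢ ∈ W' = span (F ∪ {𝟙})`, and
(iii) the Cauchy–Schwarz / local Hodge index inequality
`B(u, u, φ₁, …, φ_{n-1}) ≤ 0` for `u ∈ W₀`. -/
structure MASetup (m : ℕ) (W : Type*) [AddCommGroup W] [Module ℝ W] where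
  B : MultilinearMap ℝ (fun _ : Fin (m + 2) => W) ℝ
  symm : ∀ (v : Fin (m + 2) → W) (σ : Equiv.Perm (Fin (m + 2))), B (v ∘ σ) = B v
  one : W
  F : Set W
  Fne : F.Nonempty
  Fconv : Convex ℝ F
  unital : ∀ g : Fin (m + 1) → W, (∀ i, g i ∈ F) → B (Fin.cons one g) = 1
  parts : ∀ u ∈ Submodule.span ℝ ({x | ∃ φ ∈ F, ∃ ψ ∈ F, x = φ - ψ} ∪ {one}),
      ∀ g : Fin m → W, (∀ i, g i ∈ Submodule.span ℝ (F ∪ {one})) →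
        B (Fin.cons u (Fin.cons one g)) = 0
  hodge : ∀ u ∈ Submodule.span ℝ ({x | ∃ φ ∈ F, ∃ ψ ∈ F, x = φ - ψ} ∪ {one}),
      ∀ g : Fin m → W, (∀ i, g i ∈ F) → B (Fin.cons u (Fin.cons u g)) ≤ 0

namespace MASetup

variable {m : ℕ} {W : Type*} [AddCommGroup W] [Module ℝ W]

/-- The vector with `j` copies of `φ` followed by copies of `ψ`. -/
def mixVec (φ ψ : W) (j : ℕ) {k : ℕ} : Fin k → W := fun i => if (i : ℕ) < j then φ else ψ

/-- The linear span `W₀` of the differences of elements of `F` together with `one`. -/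
def W0 (S : MASetup m W) : Submodule ℝ W :=
  Submodule.span ℝ ({x | ∃ φ ∈ S.F, ∃ ψ ∈ S.F, x = φ - ψ} ∪ {S.one})

/-- The Monge–Ampère energy
`E(φ, ψ) = (n+1)⁻¹ ∑_{j=0}^{n} B(φ-ψ, φ, …, φ, ψ, …, ψ)` with `j` copies of `φ`
and `n - j` copies of `ψ` among the last `n` arguments. -/
noncomputable def energy (S : MASetup m W) (φ ψ : W) : ℝ :=
  ((m : ℝ) + 2)⁻¹ * ∑ j ∈ Finset.range (m + 2), S.B (Fin.cons (φ - ψ) (mixVec φ ψ j))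

/-- The functional `I(φ, ψ) = B(φ-ψ, ψ, …, ψ) - B(φ-ψ, φ, …, φ)`. -/
noncomputable def Ifun (S : MASetup m W) (φ ψ : W) : ℝ :=
  S.B (Fin.cons (φ - ψ) fun _ => ψ) - S.B (Fin.cons (φ - ψ) fun _ => φ)

/-- The functional `J_ψ(φ) = B(φ-ψ, ψ, …, ψ) - E(φ, ψ)`. -/
noncomputable def Jfun (S : MASetup m W) (ψ φ : W) : ℝ :=
  S.B (Fin.cons (φ - ψ) fun _ => ψ) - S.energy φ ψ

end MASetup

namespace MASetup

section helpers

variable {m : ℕ} {W : Type*} [AddCommGroup W] [Module ℝ W]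

/-- minus the pairing of `u`, `v` against `χ` -/
noncomputable def q (S : MASetup m W) (χ : Fin m → W) (u v : W) : ℝ :=
  - S.B (Fin.cons u (Fin.cons v χ))

theorem B_cons_sub (S : MASetup m W) (u v : W) (g : Fin (m + 1) → W) :
    S.B (Fin.cons (u - v) g) = S.B (Fin.cons u g) - S.B (Fin.cons v g) := by
  have h := S.B.cons_add g (u - v) v
  rw [sub_add_cancel] at h
  linarith

theorem q_symm (S : MASetup m W) (χ : Fin m → W) (u v : W) : S.q χ u v = S.q χ v u := by
  unfold q
  rw [← S.symm (Fin.cons u (Fin.cons v χ)) (Equiv.swap 0 1)]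
  congr 2
  funext i
  refine Fin.cases ?_ (fun i => ?_) i
  · simp [Function.comp]
  · refine Fin.cases ?_ (fun i => ?_) i
    · simp [Function.comp]
    · have : Equiv.swap (0 : Fin (m + 2)) 1 i.succ.succ = i.succ.succ := by
        apply Equiv.swap_apply_of_ne_of_ne
        · exact Fin.succ_ne_zero _
        · intro h
          have := congrArg Fin.val h
          simp at this
      simp [Function.comp, this]

theorem q_add_left (S : MASetup m W) (χ : Fin m → W) (u v w : W) :
    S.q χ (u + v) w = S.q χ u w + S.q χ v w := by
  unfold q
  rw [S.B.cons_add]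
  ring

theorem q_smul_left (S : MASetup m W) (χ : Fin m → W) (c : ℝ) (u w : W) :
    S.q χ (c • u) w = c * S.q χ u w := by
  unfold q
  rw [S.B.cons_smul]
  simp

theorem q_sub_left (S : MASetup m W) (χ : Fin m → W) (u v w : W) :
    S.q χ (u - v) w = S.q χ u w - S.q χ v w := by
  unfold q
  rw [S.B_cons_sub]
  ring

theorem q_nonneg (S : MASetup m W) {χ : Fin m → W} (hχ : ∀ i, χ i ∈ S.F) {u : W}
    (hu : u ∈ S.W0) : 0 ≤ S.q χ u u := by
  have := S.hodge u hu χ hχ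
  unfold q
  linarith

theorem sub_mem_W0 (S : MASetup m W) {s t : W} (hs : s ∈ S.F) (ht : t ∈ S.F) :
    s - t ∈ S.W0 :=
  Submodule.subset_span (Or.inl ⟨s, hs, t, ht, rfl⟩)

theorem q_cs (S : MASetup m W) {χ : Fin m → W} (hχ : ∀ i, χ i ∈ S.F) {u v : W}
    (hu : u ∈ S.W0) (hv : v ∈ S.W0) : |S.q χ u v| ≤ √(S.q χ u u * S.q χ v v) := by
  have key : ∀ t : ℝ, 0 ≤ S.q χ v v * (t * t) + 2 * S.q χ u v * t + S.q χ u u := by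
    intro t
    have h := S.q_nonneg hχ (S.W0.add_mem hu (S.W0.smul_mem t hv))
    rw [q_add_left, q_smul_left, q_symm S χ u, q_symm S χ v, q_add_left, q_add_left,
      q_smul_left, q_smul_left, q_symm S χ v u] at h
    linarith
  have h := discrim_le_zero key
  unfold discrim at h
  apply Real.abs_le_sqrt
  nlinarith

/-- swapping slot `j` of the last `m+1` with the first of them -/
theorem B_swap (S : MASetup m W) (u x y : W) (χ : Fin m → W) (i : Fin m) :
    S.q (Function.update χ i x) u y = S.q (Function.update χ i y) u x := by
  unfold q
  rw [← S.symm (Fin.cons u (Fin.cons y (Function.update χ i x))) (Equiv.swap 1 i.succ.succ)]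
  congr 2
  have h1i : (1 : Fin (m + 2)) ≠ i.succ.succ := by
    intro h
    have := congrArg Fin.val h
    simp at this
  have one_eq : (1 : Fin (m + 2)) = (0 : Fin (m + 1)).succ := rfl
  funext k
  simp only [Function.comp]
  by_cases hk1 : k = 1
  · subst hk1
    rw [Equiv.swap_apply_left]
    rw [one_eq]
    simp only [Fin.cons_succ, Fin.cons_zero, Function.update_self]
  by_cases hki : k = i.succ.succ
  · subst hki
    rw [Equiv.swap_apply_right]
    rw [one_eq]
    simp only [Fin.cons_succ, Fin.cons_zero, Function.update_self]
  rw [Equiv.swap_apply_of_ne_of_ne hk1 hki]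
  revert hk1 hki
  refine Fin.cases ?_ (fun k => ?_) k
  · intros; simp
  · refine Fin.cases ?_ (fun k => ?_) k
    · intro h; exact absurd rfl h
    · intro _ h
      have : k ≠ i := fun e => h (by rw [e])
      simp only [Fin.cons_succ, Function.update_of_ne this]

theorem q_update_sub (S : MASetup m W) (u v x y : W) (χ : Fin m → W) (i : Fin m) :
    S.q (Function.update χ i (x - y)) u v =
      S.q (Function.update χ i x) u v - S.q (Function.update χ i y) u v := by
  rw [B_swap, B_swap S u x, B_swap S u y, q_symm, q_sub_left, q_symm S _ x, q_symm S _ y]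
  

/-- Difference of two pairings in a slot, moved to the front. -/
theorem B_update (S : MASetup m W) (w : W) (g : Fin (m + 1) → W) (j : Fin (m + 1)) :
    ∃ χ : Fin m → W, (∀ i, ∃ k, χ i = g k) ∧ ∀ x,
      S.B (Fin.cons w (Function.update g j x)) = - S.q χ w x := by
  refine ⟨fun i => g (Equiv.swap 0 j i.succ), fun i => ⟨_, rfl⟩, fun x => ?_⟩
  unfold q
  rw [neg_neg, ← S.symm (Fin.cons w (Function.update g j x)) (Equiv.swap 1 j.succ)]
  congr 1
  have one_eq : (1 : Fin (m + 2)) = (0 : Fin (m + 1)).succ := rfl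
  have hs : ∀ k : Fin (m + 1), Equiv.swap (1 : Fin (m + 2)) j.succ k.succ
      = (Equiv.swap 0 j k).succ := by
    intro k
    rw [one_eq]
    simp only [Equiv.swap_apply_def, Fin.succ_inj]
    split_ifs <;> rfl
  funext k
  refine Fin.cases ?_ (fun k => ?_) k
  · have : Equiv.swap (1 : Fin (m + 2)) j.succ 0 = 0 := by
      apply Equiv.swap_apply_of_ne_of_ne
      · intro h
        have := congrArg Fin.val h
        simp at this
      · exact (Fin.succ_ne_zero _).symm
    simp only [Function.comp, this, Fin.cons_zero]
  · simp only [Function.comp, hs, Fin.cons_succ]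
    refine Fin.cases ?_ (fun k => ?_) k
    · simp
    · have : Equiv.swap 0 j k.succ ≠ j := by
        intro h
        have h2 : k.succ = 0 := by
          apply (Equiv.swap 0 j).injective
          rw [h, Equiv.swap_apply_left]
        exact Fin.succ_ne_zero _ h2
      rw [Function.update_of_ne this]
      simp

theorem q_sub_right (S : MASetup m W) (χ : Fin m → W) (u v w : W) :
    S.q χ w (u - v) = S.q χ w u - S.q χ w v := by
  rw [q_symm, q_sub_left, q_symm S χ u, q_symm S χ v]

theorem mono_step (S : MASetup m W) {x y : W} (hx : x ∈ S.F) (hy : y ∈ S.F)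
    (g : Fin (m + 1) → W) (hg : ∀ i, g i ∈ S.F) (j : Fin (m + 1)) :
    S.B (Fin.cons (x - y) (Function.update g j x)) ≤
      S.B (Fin.cons (x - y) (Function.update g j y)) := by
  obtain ⟨χ, h1, h2⟩ := S.B_update (x - y) g j
  have hχ : ∀ i, χ i ∈ S.F := fun i => by
    obtain ⟨k, hk⟩ := h1 i
    rw [hk]; exact hg k
  have := S.q_nonneg hχ (S.sub_mem_W0 hx hy)
  rw [q_sub_right] at this
  rw [h2, h2]
  linarith

theorem mono_le (S : MASetup m W) {x y : W} (hx : x ∈ S.F) (hy : y ∈ S.F)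
    (g : Fin (m + 1) → W) (hg : ∀ i, g i = x ∨ g i = y) (s : Finset (Fin (m + 1))) :
    S.B (Fin.cons (x - y) (s.piecewise (fun _ => x) g)) ≤ S.B (Fin.cons (x - y) g) := by
  have hF : ∀ i, g i ∈ S.F := fun i => by
    rcases hg i with h | h <;> rw [h] <;> assumption
  induction s using Finset.induction_on with
  | empty => simp
  | insert j s hj ih =>
    rw [Finset.piecewise_insert]
    refine le_trans ?_ ih
    have hg' : ∀ i, s.piecewise (fun _ => x) g i ∈ S.F := fun i => by
      by_cases h : i ∈ s <;> simp [h, hx, hF]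
    rcases hg j with h | h
    · apply le_of_eq
      congr 2
      rw [← h]
      conv_rhs => rw [← Function.update_eq_self j (s.piecewise (fun _ => g j) g)]
      simp [hj]
    · have := S.mono_step hx hy _ hg' j
      refine this.trans (le_of_eq ?_)
      congr 2
      conv_rhs => rw [← Function.update_eq_self j (s.piecewise (fun _ => x) g)]
      simp [hj, h]

theorem mono_bot (S : MASetup m W) {x y : W} (hx : x ∈ S.F) (hy : y ∈ S.F)
    (g : Fin (m + 1) → W) (hg : ∀ i, g i = x ∨ g i = y) :
    S.B (Fin.cons (x - y) (fun _ => x)) ≤ S.B (Fin.cons (x - y) g) := by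
  have := S.mono_le hx hy g hg Finset.univ
  simpa using this

theorem mono_top (S : MASetup m W) {x y : W} (hx : x ∈ S.F) (hy : y ∈ S.F)
    (g : Fin (m + 1) → W) (hg : ∀ i, g i = x ∨ g i = y) :
    S.B (Fin.cons (x - y) g) ≤ S.B (Fin.cons (x - y) (fun _ => y)) := by
  have := S.mono_bot hy hx g (fun i => (hg i).symm)
  rw [B_cons_sub, B_cons_sub] at *
  linarith

theorem q_le_I (S : MASetup m W) {x y : W} (hx : x ∈ S.F) (hy : y ∈ S.F)
    (χ : Fin m → W) (hχ : ∀ i, χ i = x ∨ χ i = y) :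
    S.q χ (x - y) (x - y) ≤ S.Ifun x y := by
  have h1 := S.mono_bot hx hy (Fin.cons x χ) (fun i => by
    refine Fin.cases ?_ (fun i => ?_) i
    · simp
    · simpa using hχ i)
  have h2 := S.mono_top hx hy (Fin.cons y χ) (fun i => by
    refine Fin.cases ?_ (fun i => ?_) i
    · simp
    · simpa using hχ i)
  rw [q_sub_right]
  unfold Ifun q
  linarith

theorem Ifun_nonneg (S : MASetup m W) {x y : W} (hx : x ∈ S.F) (hy : y ∈ S.F) :
    0 ≤ S.Ifun x y := by
  have h := S.mono_bot hx hy (fun _ => y) (fun i => Or.inr rfl)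
  unfold Ifun
  linarith

theorem Ifun_le_J (S : MASetup m W) {x y : W} (hx : x ∈ S.F) (hy : y ∈ S.F) :
    S.Ifun x y ≤ (m + 2) * S.Jfun y x := by
  have h0 : ∀ j, S.B (Fin.cons (x - y) (mixVec x y j)) ≤ S.B (Fin.cons (x - y) fun _ => y) :=
    fun j => S.mono_top hx hy _ (fun i => by unfold mixVec; split_ifs <;> simp)
  have h1 : S.B (Fin.cons (x - y) (mixVec x y (m + 1))) = S.B (Fin.cons (x - y) fun _ => x) := by
    congr 2
    funext i
    simp only [mixVec, i.isLt, if_true]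
  have h2 : ∑ j ∈ Finset.range (m + 1), S.B (Fin.cons (x - y) (mixVec x y j)) ≤
      (m + 1) * S.B (Fin.cons (x - y) fun _ => y) := by
    refine (Finset.sum_le_sum (fun j _ => h0 j)).trans (le_of_eq ?_)
    simp
  unfold Jfun energy
  rw [Finset.sum_range_succ, h1, mul_sub, mul_inv_cancel_left₀ (by positivity)]
  unfold Ifun
  linarith

theorem main_step (S : MASetup m W) (T : Set W) (hT : T ⊆ S.F) (Q : ℝ)
    (hQ : ∀ s ∈ T, ∀ t ∈ T, ∀ χ : Fin m → W, (∀ i, χ i ∈ T) → S.q χ (s - t) (s - t) ≤ Q)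
    {x y : W} (hx : x ∈ T) (hy : y ∈ T) (s : Finset (Fin m)) :
    ∀ χ : Fin m → W, (∀ i, χ i ∈ T) → (∀ i, i ∉ s → χ i = x ∨ χ i = y) →
      S.q χ (x - y) (x - y) ≤
        9 * S.Ifun x y ^ ((1 : ℝ) / 2 ^ s.card) * Q ^ (1 - (1 : ℝ) / 2 ^ s.card) := by
  have hI := S.Ifun_nonneg (hT hx) (hT hy)
  have hu := S.sub_mem_W0 (hT hx) (hT hy)
  induction s using Finset.induction_on with
  | empty =>
    intro χ h1 h2
    have := S.q_le_I (hT hx) (hT hy) χ (fun i => h2 i (by simp))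
    simp
    linarith
  | insert j s hj ih =>
    intro χ h1 h2
    have hup : ∀ z ∈ T, ∀ i, Function.update χ j z i ∈ T := fun z hz i => by
      by_cases h : i = j
      · subst h; simpa using hz
      · simpa [h] using h1 i
    have hup2 : ∀ z, (z = x ∨ z = y) → ∀ i, i ∉ s →
        Function.update χ j z i = x ∨ Function.update χ j z i = y := fun z hz i hi => by
      by_cases h : i = j
      · subst h; simpa using hz
      · simpa [h] using h2 i (by simp [h, hi])
    rw [Finset.card_insert_of_notMem hj]
    set k := s.card
    set R := 9 * S.Ifun x y ^ ((1 : ℝ) / 2 ^ k) * Q ^ (1 - (1 : ℝ) / 2 ^ k) with hR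
    have hQ0 : 0 ≤ Q := (S.q_nonneg (fun i => hT (h1 i)) hu).trans (hQ x hx y hy χ h1)
    have hv := S.sub_mem_W0 (hT (h1 j)) (hT hx)
    have est : ∀ z ∈ T, (z = x ∨ z = y) →
        |S.q (Function.update χ j z) (x - y) (χ j - x)| ≤ √(R * Q) := by
      intro z hz hz'
      refine (S.q_cs (fun i => hT (hup z hz i)) hu hv).trans (Real.sqrt_le_sqrt ?_)
      have a1 := ih _ (hup z hz) (hup2 z hz')
      have a2 := hQ _ (h1 j) _ hx _ (hup z hz)
      have a3 := S.q_nonneg (fun i => hT (hup z hz i)) hu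
      exact mul_le_mul a1 a2 (S.q_nonneg (fun i => hT (hup z hz i)) hv) (a3.trans a1)
    have e1 := est x hx (Or.inl rfl)
    have e2 := est y hy (Or.inr rfl)
    have e3 : S.q (Function.update χ j x) (x - y) (x - y) ≤ √(R * Q) := by
      have a1 := ih _ (hup x hx) (hup2 x (Or.inl rfl))
      have a2 := hQ _ hx _ hy _ (hup x hx)
      have a3 := S.q_nonneg (fun i => hT (hup x hx i)) hu
      apply Real.le_sqrt_of_sq_le
      rw [sq]
      exact mul_le_mul a1 a2 a3 (a3.trans a1)
    have split : S.q χ (x - y) (x - y) = S.q (Function.update χ j x) (x - y) (x - y)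
        + (S.q (Function.update χ j x) (x - y) (χ j - x)
          - S.q (Function.update χ j y) (x - y) (χ j - x)) := by
      rw [← q_update_sub, B_swap S _ (x - y), q_update_sub, Function.update_eq_self]
      ring
    have fin : 3 * √(R * Q) = 9 * S.Ifun x y ^ ((1 : ℝ) / 2 ^ (k + 1)) *
        Q ^ (1 - (1 : ℝ) / 2 ^ (k + 1)) := by
      have hk : (1 : ℝ) / 2 ^ k ≤ 1 := by
        rw [div_le_one (by positivity)]
        exact one_le_pow₀ (by norm_num)
      have : R * Q = (3 * S.Ifun x y ^ ((1 : ℝ) / 2 ^ (k + 1)) *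
        Q ^ (1 - (1 : ℝ) / 2 ^ (k + 1))) ^ 2 := by
        have b1 : S.Ifun x y ^ ((1 : ℝ) / 2 ^ k) = (S.Ifun x y ^ ((1 : ℝ) / 2 ^ (k + 1))) ^ 2 := by
          rw [← Real.rpow_mul_natCast hI]
          congr 1
          push_cast
          field_simp
          ring
        have b2 : Q ^ (1 - (1 : ℝ) / 2 ^ k) * Q = (Q ^ (1 - (1 : ℝ) / 2 ^ (k + 1))) ^ 2 := by
          rw [← Real.rpow_mul_natCast hQ0]
          conv_lhs => rw [← Real.rpow_one Q, ← Real.rpow_mul hQ0, one_mul,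
            ← Real.rpow_add_of_nonneg hQ0 (by linarith) (by norm_num)]
          congr 1
          push_cast
          field_simp
          ring
        rw [hR, mul_assoc, b2, b1]
        ring
      rw [this, Real.sqrt_sq (by positivity)]
      ring
    rw [← fin, split]
    have := abs_le.1 e1
    have := abs_le.1 e2
    linarith

theorem main_bound (S : MASetup m W) (T : Set W) (hT : T ⊆ S.F) (Q : ℝ)
    (hQ : ∀ s ∈ T, ∀ t ∈ T, ∀ χ : Fin m → W, (∀ i, χ i ∈ T) → S.q χ (s - t) (s - t) ≤ Q)
    {x y : W} (hx : x ∈ T) (hy : y ∈ T) (χ : Fin m → W) (hχ : ∀ i, χ i ∈ T) :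
      S.q χ (x - y) (x - y) ≤
        9 * S.Ifun x y ^ ((1 : ℝ) / 2 ^ m) * Q ^ (1 - (1 : ℝ) / 2 ^ m) := by
  have := S.main_step T hT Q hQ hx hy Finset.univ χ hχ (by simp)
  simpa using this

theorem exists_Q (S : MASetup m W) (T : Set W) (hfin : T.Finite) (hT : T ⊆ S.F)
    (r : W) (hr : r ∈ T) (M : ℝ) (hM : ∀ s ∈ T, S.Ifun s r ≤ M) :
    ∃ Q : ℝ, 0 ≤ Q ∧ Q ≤ 36 ^ (2 ^ m) * M ∧
      ∀ s ∈ T, ∀ t ∈ T, ∀ χ : Fin m → W, (∀ i, χ i ∈ T) → S.q χ (s - t) (s - t) ≤ Q := by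
  have : Finite T := hfin
  have : Nonempty T := ⟨⟨r, hr⟩⟩
  obtain ⟨⟨s, t, χ⟩, hmax⟩ := Finite.exists_max
    (fun p : T × T × (Fin m → T) => S.q (fun i => (p.2.2 i : W)) (p.1 - p.2.1) (p.1 - p.2.1))
  set Q := S.q (fun i => (χ i : W)) (s - t) (s - t) with hQdef
  have hQ : ∀ s ∈ T, ∀ t ∈ T, ∀ χ : Fin m → W, (∀ i, χ i ∈ T) → S.q χ (s - t) (s - t) ≤ Q :=
    fun s hs t ht χ hχ => hmax ⟨⟨s, hs⟩, ⟨t, ht⟩, fun i => ⟨χ i, hχ i⟩⟩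
  have hχF : ∀ i, (χ i : W) ∈ S.F := fun i => hT (χ i).2
  have hQ0 : 0 ≤ Q := S.q_nonneg hχF (S.sub_mem_W0 (hT s.2) (hT t.2))
  have hM0 : 0 ≤ M := (S.Ifun_nonneg (hT hr) (hT hr)).trans (hM r hr)
  refine ⟨Q, hQ0, ?_, hQ⟩
  rcases hQ0.eq_or_lt with h0 | hpos
  · rw [← h0]; positivity
  have hε : (0 : ℝ) < 1 / 2 ^ m := by positivity
  have bd : ∀ z : T, S.q (fun i => (χ i : W)) (z - r) (z - r) ≤
      9 * M ^ ((1 : ℝ) / 2 ^ m) * Q ^ (1 - (1 : ℝ) / 2 ^ m) := fun z => by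
    refine (S.main_bound T hT Q hQ z.2 hr _ (fun i => (χ i).2)).trans ?_
    have := Real.rpow_le_rpow (S.Ifun_nonneg (hT z.2) (hT hr)) (hM z z.2) hε.le
    gcongr
  have para : Q ≤ 2 * S.q (fun i => (χ i : W)) (s - r) (s - r)
      + 2 * S.q (fun i => (χ i : W)) (t - r) (t - r) := by
    have h := S.q_nonneg hχF (S.W0.add_mem (S.sub_mem_W0 (hT s.2) (hT hr))
      (S.sub_mem_W0 (hT t.2) (hT hr)))
    have e : (s : W) - t = (s - r) - (t - r) := by abel
    rw [hQdef, e]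
    generalize (s : W) - r = a at *
    generalize (t : W) - r = b at *
    rw [q_sub_left, q_sub_right, q_sub_right]
    rw [q_add_left, q_symm, q_add_left, q_symm S _ b (_ + _), q_add_left] at h
    linarith
  have h1 : Q ≤ 36 * M ^ ((1 : ℝ) / 2 ^ m) * Q ^ (1 - (1 : ℝ) / 2 ^ m) := by
    linarith [bd s, bd t]
  have h2 : Q ^ ((1 : ℝ) / 2 ^ m) ≤ 36 * M ^ ((1 : ℝ) / 2 ^ m) := by
    have e : Q = Q ^ ((1 : ℝ) / 2 ^ m) * Q ^ (1 - (1 : ℝ) / 2 ^ m) := by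
      rw [← Real.rpow_add hpos]
      simp
    have hp : 0 < Q ^ (1 - (1 : ℝ) / 2 ^ m) := Real.rpow_pos_of_pos hpos _
    refine le_of_mul_le_mul_right ?_ hp
    rw [← e]
    exact h1
  have h3 : 36 * M ^ ((1 : ℝ) / 2 ^ m) = (36 ^ (2 ^ m) * M) ^ ((1 : ℝ) / 2 ^ m) := by
    rw [Real.mul_rpow (by positivity) hM0, ← Real.rpow_natCast (36 : ℝ) (2 ^ m),
      ← Real.rpow_mul (by norm_num)]
    simp
  rw [h3] at h2
  exact (Real.rpow_le_rpow_iff hQ0 (by positivity) hε).1 h2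

theorem final_sum (S : MASetup m W) (T : Set W) {x y w : W} (hx : x ∈ T) (hy : y ∈ T)
    (K : ℝ) (hK : ∀ χ : Fin m → W, (∀ i, χ i ∈ T) → |S.q χ w (x - y)| ≤ K)
    (s : Finset (Fin (m + 1))) :
    S.B (Fin.cons w (s.piecewise (fun _ => x) (fun _ => y))) - S.B (Fin.cons w fun _ => y)
      ≤ s.card * K := by
  induction s using Finset.induction_on with
  | empty => simp
  | insert j s hj ih =>
    rw [Finset.card_insert_of_notMem hj, Finset.piecewise_insert]
    set g : Fin (m + 1) → W := s.piecewise (fun _ => x) (fun _ => y) with hg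
    obtain ⟨χ, h1, h2⟩ := S.B_update w g j
    have hgj : Function.update g j y = g := by
      conv_rhs => rw [← Function.update_eq_self j g]
      simp [hg, hj]
    have hχ : ∀ i, χ i ∈ T := fun i => by
      obtain ⟨k, hk⟩ := h1 i
      rw [hk]
      by_cases h : k ∈ s <;> simp [hg, h, hx, hy]
    have h3 := h2 y
    rw [hgj] at h3
    have h4 := abs_le.1 (hK χ hχ)
    rw [q_sub_right] at h4
    rw [h2 x]
    push_cast
    linarith

end helpers

end MASetup

/-- there is `C > 0` depending only on `n = m + 1` such that for
every setup, reference `φ_ref ∈ F`, and all `φ₁, φ₂, ψ₁, ψ₂ ∈ F`: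
`B(ψ₁-ψ₂, φ₁,…,φ₁) - B(ψ₁-ψ₂, φ₂,…,φ₂) ≤
  C I(ψ₁,ψ₂)^{1/2ⁿ} I(φ₁,φ₂)^{1/2ⁿ} M^{1-1/2^{n-1}}` where
`M = max{J(φ₁), J(φ₂), J(ψ₁), J(ψ₂)}`. -/
theorem MA_measure_continuity (m : ℕ) :
    ∃ C : ℝ, 0 < C ∧
      ∀ (W : Type*) [AddCommGroup W] [Module ℝ W] (S : MASetup m W),
        ∀ φref ∈ S.F, ∀ φ₁ ∈ S.F, ∀ φ₂ ∈ S.F, ∀ ψ₁ ∈ S.F, ∀ ψ₂ ∈ S.F,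
          S.B (Fin.cons (ψ₁ - ψ₂) fun _ => φ₁) -
              S.B (Fin.cons (ψ₁ - ψ₂) fun _ => φ₂) ≤
            C * S.Ifun ψ₁ ψ₂ ^ ((1 : ℝ) / 2 ^ (m + 1)) *
              S.Ifun φ₁ φ₂ ^ ((1 : ℝ) / 2 ^ (m + 1)) *
              (max (max (S.Jfun φref φ₁) (S.Jfun φref φ₂))
                  (max (S.Jfun φref ψ₁) (S.Jfun φref ψ₂))) ^
                (1 - (1 : ℝ) / 2 ^ m) := by

  refine ⟨(m + 1) * 9 * (36 ^ (2 ^ m) * (m + 2)) ^ (1 - (1 : ℝ) / 2 ^ m), by positivity, ?_⟩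
  intro W _ _ S r hr φ₁ h₁ φ₂ h₂ ψ₁ k₁ ψ₂ k₂
  set M := max (max (S.Jfun r φ₁) (S.Jfun r φ₂)) (max (S.Jfun r ψ₁) (S.Jfun r ψ₂)) with hM
  have hm : (0 : ℝ) < m + 2 := by positivity
  let T : Set W := {r, φ₁, φ₂, ψ₁, ψ₂}
  have hT : T ⊆ S.F := by
    rintro z (rfl | rfl | rfl | rfl | rfl) <;> assumption
  have J1 : S.Jfun r φ₁ ≤ M := by simp [hM]
  have J2 : S.Jfun r φ₂ ≤ M := by simp [hM]
  have J3 : S.Jfun r ψ₁ ≤ M := by simp [hM]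
  have J4 : S.Jfun r ψ₂ ≤ M := by simp [hM]
  have step : ∀ z ∈ S.F, S.Jfun r z ≤ M → S.Ifun z r ≤ (m + 2) * M := fun z hz hJ =>
    (S.Ifun_le_J hz hr).trans (mul_le_mul_of_nonneg_left hJ hm.le)
  have I1 := step _ h₁ J1
  have hM0' : 0 ≤ (m + 2) * M := (S.Ifun_nonneg h₁ hr).trans I1
  have hM0 : 0 ≤ M := nonneg_of_mul_nonneg_right hM0' hm
  have hI : ∀ s ∈ T, S.Ifun s r ≤ (m + 2) * M := by
    rintro z (rfl | rfl | rfl | rfl | rfl)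
    · have : S.Ifun z z = 0 := by simp [MASetup.Ifun]
      rw [this]; exact hM0'
    · exact I1
    · exact step _ h₂ J2
    · exact step _ k₁ J3
    · exact step _ k₂ J4
  obtain ⟨Q, hQ0, hQM, hQ⟩ := S.exists_Q T (by simp [T]) hT r (by simp [T]) _ hI
  have tφ₁ : φ₁ ∈ T := by simp [T]
  have tφ₂ : φ₂ ∈ T := by simp [T]
  have tψ₁ : ψ₁ ∈ T := by simp [T]
  have tψ₂ : ψ₂ ∈ T := by simp [T]
  have A0 := S.Ifun_nonneg k₁ k₂
  have B0 := S.Ifun_nonneg h₁ h₂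
  have root : ∀ a : ℝ, 0 ≤ a →
      a ^ ((1 : ℝ) / 2 ^ m) = (a ^ ((1 : ℝ) / 2 ^ (m + 1))) ^ 2 := fun a ha => by
    rw [← Real.rpow_mul_natCast ha]
    congr 1
    push_cast
    field_simp
    ring
  have hK : ∀ χ : Fin m → W, (∀ i, χ i ∈ T) → |S.q χ (ψ₁ - ψ₂) (φ₁ - φ₂)| ≤
      9 * S.Ifun ψ₁ ψ₂ ^ ((1 : ℝ) / 2 ^ (m + 1)) * S.Ifun φ₁ φ₂ ^ ((1 : ℝ) / 2 ^ (m + 1)) *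
        Q ^ (1 - (1 : ℝ) / 2 ^ m) := by
    intro χ hχ
    have hχF := fun i => hT (hχ i)
    have hu := S.sub_mem_W0 k₁ k₂
    have hv := S.sub_mem_W0 h₁ h₂
    refine (S.q_cs hχF hu hv).trans ?_
    apply Real.sqrt_le_iff.2 ⟨by positivity, ?_⟩
    have a1 := S.main_bound T hT Q hQ tψ₁ tψ₂ χ hχ
    have a2 := S.main_bound T hT Q hQ tφ₁ tφ₂ χ hχ
    have a3 := S.q_nonneg hχF hu
    refine (mul_le_mul a1 a2 (S.q_nonneg hχF hv) (a3.trans a1)).trans (le_of_eq ?_)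
    rw [root _ A0, root _ B0]
    ring
  have main := S.final_sum T tφ₁ tφ₂ _ hK Finset.univ
  rw [Finset.piecewise_univ] at main
  refine main.trans ?_
  have hk : (0 : ℝ) ≤ 1 - 1 / 2 ^ m := by
    rw [sub_nonneg, div_le_one (by positivity)]
    exact one_le_pow₀ (by norm_num)
  have hQp : Q ^ (1 - (1 : ℝ) / 2 ^ m) ≤
      (36 ^ (2 ^ m) * (m + 2)) ^ (1 - (1 : ℝ) / 2 ^ m) * M ^ (1 - (1 : ℝ) / 2 ^ m) := by
    rw [← Real.mul_rpow (by positivity) hM0]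
    exact Real.rpow_le_rpow hQ0 (hQM.trans (le_of_eq (by ring))) hk
  rw [Finset.card_univ, Fintype.card_fin]
  push_cast
  set a := S.Ifun ψ₁ ψ₂ ^ ((1 : ℝ) / 2 ^ (m + 1))
  set b := S.Ifun φ₁ φ₂ ^ ((1 : ℝ) / 2 ^ (m + 1))
  have ha : 0 ≤ a := Real.rpow_nonneg A0 _
  have hb : 0 ≤ b := Real.rpow_nonneg B0 _
  have := mul_le_mul_of_nonneg_left hQp (show 0 ≤ ((m : ℝ) + 1) * (9 * a * b) by positivity)
  refine le_trans (le_of_eq (by ring)) (this.trans (le_of_eq (by ring)))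
end

section
/- For all φ, ψ ∈ F and all t ∈ [0,1], one has J_ψ(t·φ + (1−t)·ψ) ≤ t^{1 + 1/n} · J_ψ(φ). -/
open Finset

namespace MAaux

variable {W : Type*} [AddCommGroup W] [Module ℝ W]

/-- Symmetry of a multilinear form. -/
def Sym {k : ℕ} (B : MultilinearMap ℝ (fun _ : Fin k => W) ℝ) : Prop :=
  ∀ (v : Fin k → W) (σ : Equiv.Perm (Fin k)), B (v ∘ σ) = B v

theorem Sym.curry {k : ℕ} {B : MultilinearMap ℝ (fun _ : Fin (k + 1) => W) ℝ} (h : Sym B)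
    (w : W) : Sym (B.curryLeft w) := by
  intro v σ
  have := h (Fin.cons w v) (Equiv.Perm.decomposeFin.symm (0, σ))
  simp only [MultilinearMap.curryLeft_apply]
  rw [← this]
  congr 1
  funext i
  refine Fin.cases ?_ (fun i => ?_) i
  · simp
  · simp [Equiv.Perm.decomposeFin_symm_apply_succ]

theorem Sym.insertNth {k : ℕ} {B : MultilinearMap ℝ (fun _ : Fin (k + 1) => W) ℝ} (h : Sym B)
    (w : W) (v : Fin k → W) (p : Fin (k + 1)) :
    B (p.insertNth (α := fun _ => W) w v) = B (Fin.cons w v) := by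
  rw [← Fin.cons_comp_cycleRange]
  exact h _ _

theorem mix_succ (φ ψ : W) (j k : ℕ) :
    (MASetup.mixVec φ ψ (j + 1) : Fin (k + 1) → W) = Fin.cons φ (MASetup.mixVec φ ψ j) := by
  funext i
  refine Fin.cases ?_ (fun i => ?_) i
  · simp [MASetup.mixVec]
  · simp [MASetup.mixVec]

theorem mix_insert (φ ψ : W) (j k : ℕ) (hj : j < k + 1) :
    (MASetup.mixVec φ ψ j : Fin (k + 1) → W) =
      Fin.insertNth (α := fun _ => W) ⟨j, hj⟩ ψ (MASetup.mixVec φ ψ j) := by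
  symm
  rw [Fin.insertNth_eq_iff]
  constructor
  · simp [MASetup.mixVec]
  · funext i
    simp only [MASetup.mixVec, Fin.removeNth, Fin.succAbove, Fin.lt_def]
    by_cases h : (i : ℕ) < j
    · simp [h]
    · have : ¬ ((i : ℕ) + 1 < j) := by omega
      simp [h, this]

theorem Sym.step {k : ℕ} {B : MultilinearMap ℝ (fun _ : Fin (k + 1) => W) ℝ} (h : Sym B)
    (φ ψ : W) (j : ℕ) (hj : j < k + 1) :
    B (Fin.cons (φ - ψ) (MASetup.mixVec φ ψ j)) =
      B (MASetup.mixVec φ ψ (j + 1)) - B (MASetup.mixVec φ ψ j) := by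
  rw [mix_succ, mix_insert φ ψ j k hj, h.insertNth, ← MultilinearMap.curryLeft_apply,
    ← MultilinearMap.curryLeft_apply, ← MultilinearMap.curryLeft_apply, map_sub]
  rfl

theorem mix_zero (φ ψ : W) (k : ℕ) : (MASetup.mixVec φ ψ 0 : Fin k → W) = fun _ => ψ := by
  funext i; simp [MASetup.mixVec]

theorem mix_top (φ ψ : W) (k : ℕ) : (MASetup.mixVec φ ψ k : Fin k → W) = fun _ => φ := by
  funext i; simp [MASetup.mixVec]

theorem Sym.telescope {k : ℕ} {B : MultilinearMap ℝ (fun _ : Fin (k + 1) => W) ℝ} (h : Sym B)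
    (φ ψ : W) :
    ∑ j ∈ Finset.range (k + 1), B (Fin.cons (φ - ψ) (MASetup.mixVec φ ψ j)) =
      B (fun _ => φ) - B (fun _ => ψ) := by
  rw [Finset.sum_congr rfl (fun j hj => h.step φ ψ j (Finset.mem_range.1 hj)),
    Finset.sum_range_sub (fun j => B (MASetup.mixVec φ ψ j)), mix_top, mix_zero]

theorem cont : ∀ {k : ℕ} (B : MultilinearMap ℝ (fun _ : Fin k => W) ℝ) (a b : Fin k → W),
    Continuous fun s : ℝ => B (fun i => a i + s • b i)
  | 0, B, a, b => by
    have : (fun s : ℝ => B (fun i => a i + s • b i)) = fun _ => B a := by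
      funext s; congr 1; funext i; exact i.elim0
    rw [this]; exact continuous_const
  | k + 1, B, a, b => by
    have : (fun s : ℝ => B (fun i => a i + s • b i)) = fun s =>
        B.curryLeft (a 0) (fun i => a i.succ + s • b i.succ) +
        s * B.curryLeft (b 0) (fun i => a i.succ + s • b i.succ) := by
      funext s
      have e : (fun i => a i + s • b i) =
          Fin.cons (α := fun _ => W) (a 0 + s • b 0) (fun i : Fin k => a i.succ + s • b i.succ) := by
        funext i
        refine Fin.cases ?_ (fun i => ?_) i <;> simp
      rw [e, ← MultilinearMap.curryLeft_apply, map_add, map_smul]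
      rfl
    rw [this]
    exact (cont (B.curryLeft (a 0)) _ _).add (continuous_id.mul (cont (B.curryLeft (b 0)) _ _))

theorem Sym.deriv {k : ℕ} {B : MultilinearMap ℝ (fun _ : Fin (k + 1) => W) ℝ} (h : Sym B)
    (ψ u : W) (t : ℝ) :
    HasDerivAt (fun s : ℝ => B (fun _ => ψ + s • u))
      (((k : ℝ) + 1) * B (Fin.cons u fun _ => ψ + t • u)) t := by
  set H : ℝ → ℝ := fun s => ∑ j ∈ Finset.range (k + 1),
    B (Fin.cons u (MASetup.mixVec (ψ + s • u) (ψ + t • u) j)) with hH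
  have hc : Continuous H := by
    refine continuous_finsetSum _ fun j _ => ?_
    have := cont (B.curryLeft u) (fun i : Fin k => if (i : ℕ) < j then ψ else ψ + t • u)
      (fun i : Fin k => if (i : ℕ) < j then u else 0)
    convert this using 2 with s
    rw [MultilinearMap.curryLeft_apply]
    congr 2
    funext i
    by_cases hi : (i : ℕ) < j <;> simp [MASetup.mixVec, hi]
  have hv : H t = ((k : ℝ) + 1) * B (Fin.cons u fun _ => ψ + t • u) := by
    have e : ∀ j, (MASetup.mixVec (ψ + t • u) (ψ + t • u) j : Fin k → W) = fun _ => ψ + t • u := by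
      intro j; funext i; unfold MASetup.mixVec; exact ite_self _
    simp [hH, e]
  have hs : ∀ s, B (fun _ => ψ + s • u) - B (fun _ => ψ + t • u) = (s - t) * H s := by
    intro s
    rw [← h.telescope, hH, Finset.mul_sum]
    refine Finset.sum_congr rfl fun j _ => ?_
    have : ψ + s • u - (ψ + t • u) = (s - t) • u := by module
    rw [this, ← MultilinearMap.curryLeft_apply, map_smul]
    rfl
  rw [← hv, hasDerivAt_iff_tendsto_slope]
  refine (hc.continuousAt.tendsto.mono_left nhdsWithin_le_nhds).congr' ?_
  filter_upwards [self_mem_nhdsWithin] with s hst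
  have : s - t ≠ 0 := sub_ne_zero.2 hst
  rw [slope_def_field, hs]
  field_simp

variable {m : ℕ}

theorem segment_mem (S : MASetup m W) {φ ψ : W} (hφ : φ ∈ S.F) (hψ : ψ ∈ S.F)
    {t : ℝ} (ht : t ∈ Set.Icc (0 : ℝ) 1) : ψ + t • (φ - ψ) ∈ S.F := by
  have := S.Fconv hψ hφ (sub_nonneg.2 ht.2) ht.1 (by ring)
  convert this using 1
  module

theorem J_eq (S : MASetup m W) (φ ψ : W) :
    S.Jfun ψ φ = S.B (Fin.cons (φ - ψ) fun _ => ψ) -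
      ((m : ℝ) + 2)⁻¹ * (S.B (fun _ => φ) - S.B (fun _ => ψ)) := by
  have h : Sym S.B := S.symm
  rw [MASetup.Jfun, MASetup.energy, h.telescope]

theorem anti (S : MASetup m W) {φ ψ : W} (hφ : φ ∈ S.F) (hψ : ψ ∈ S.F) (j : ℕ) (hj : j ≤ m + 1) :
    S.B (Fin.cons (φ - ψ) fun _ => φ) ≤ S.B (Fin.cons (φ - ψ) (MASetup.mixVec φ ψ j)) := by
  have h : Sym S.B := S.symm
  induction hj using Nat.decreasingInduction with
  | self => rw [mix_top]
  | of_succ j hj ih =>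
    refine ih.trans ?_
    have h1 := (h.curry (φ - ψ)).step φ ψ j hj
    simp only [MultilinearMap.curryLeft_apply] at h1
    have h2 := S.hodge (φ - ψ) (Submodule.subset_span (Or.inl ⟨φ, hφ, ψ, hψ, rfl⟩))
      (MASetup.mixVec φ ψ j) (fun i => by unfold MASetup.mixVec; split_ifs <;> assumption)
    linarith

theorem J_le (S : MASetup m W) {φ ψ : W} (hφ : φ ∈ S.F) (hψ : ψ ∈ S.F) :
    ((m : ℝ) + 2) * S.Jfun ψ φ ≤ ((m : ℝ) + 1) * S.Ifun φ ψ := by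
  have hm : ((m : ℝ) + 2) ≠ 0 := by positivity
  rw [MASetup.Jfun, MASetup.energy, MASetup.Ifun, mul_sub, ← mul_assoc, mul_inv_cancel₀ hm, one_mul,
    Finset.sum_range_succ', mix_zero]
  have : ∑ j ∈ Finset.range (m + 1), S.B (Fin.cons (φ - ψ) fun _ => φ) ≤
      ∑ j ∈ Finset.range (m + 1), S.B (Fin.cons (φ - ψ) (MASetup.mixVec φ ψ (j + 1))) :=
    Finset.sum_le_sum fun j hj => anti S hφ hψ (j + 1) (Finset.mem_range.1 hj)
  simp only [Finset.sum_const, Finset.card_range, nsmul_eq_mul] at this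
  push_cast at this
  linarith

theorem cons_smul (S : MASetup m W) (t : ℝ) (u : W) (v : Fin (m + 1) → W) :
    S.B (Fin.cons (t • u) v) = t * S.B (Fin.cons u v) := by
  rw [← MultilinearMap.curryLeft_apply, map_smul]; rfl

theorem J_deriv (S : MASetup m W) (ψ u : W) (t : ℝ) :
    HasDerivAt (fun s : ℝ => S.Jfun ψ (ψ + s • u))
      (S.B (Fin.cons u fun _ => ψ) - S.B (Fin.cons u fun _ => ψ + t • u)) t := by
  have h : Sym S.B := S.symm
  have hm : ((m : ℝ) + 2) ≠ 0 := by positivity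
  simp only [J_eq, add_sub_cancel_left, cons_smul]
  have h1 := ((hasDerivAt_id t).mul_const (S.B (Fin.cons u fun _ => ψ))).sub
    (((h.deriv ψ u t).sub_const (S.B fun _ => ψ)).const_mul ((m : ℝ) + 2)⁻¹)
  refine h1.congr_deriv ?_
  push_cast
  field_simp
  ring

end MAaux

/-- `J_ψ(tφ + (1-t)ψ) ≤ t^{1+1/n} J_ψ(φ)` for `t ∈ [0,1]`,
with `n = m + 1`. -/
theorem Jfun_segment (m : ℕ) {W : Type*} [AddCommGroup W] [Module ℝ W]
    (S : MASetup m W) {φ ψ : W} (hφ : φ ∈ S.F) (hψ : ψ ∈ S.F)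
    {t : ℝ} (ht : t ∈ Set.Icc (0 : ℝ) 1) :
    S.Jfun ψ (t • φ + (1 - t) • ψ) ≤
      t ^ ((1 : ℝ) + 1 / ((m : ℝ) + 1)) * S.Jfun ψ φ := by
  have hrw : t • φ + (1 - t) • ψ = ψ + t • (φ - ψ) := by module
  rw [hrw]
  set α : ℝ := (1 : ℝ) + 1 / ((m : ℝ) + 1) with hα
  have hm : (0 : ℝ) < (m : ℝ) + 1 := by positivity
  have hαpos : 0 < α := by positivity
  have hJ1 : S.Jfun ψ (ψ + (1 : ℝ) • (φ - ψ)) = S.Jfun ψ φ := by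
    congr 1; module
  rcases ht.1.eq_or_lt with h0 | h0
  · subst h0
    rw [Real.zero_rpow hαpos.ne', zero_mul, MAaux.J_eq]
    simp only [add_sub_cancel_left, MAaux.cons_smul]
    simp
  · have hd : ∀ s : ℝ, 0 < s → HasDerivAt
        (fun s : ℝ => S.Jfun ψ (ψ + s • (φ - ψ)) * s ^ (-α))
        ((S.B (Fin.cons (φ - ψ) fun _ => ψ) -
          S.B (Fin.cons (φ - ψ) fun _ => ψ + s • (φ - ψ))) * s ^ (-α) +
          S.Jfun ψ (ψ + s • (φ - ψ)) * (-α * s ^ (-α - 1))) s := fun s hs =>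
      (MAaux.J_deriv S ψ (φ - ψ) s).mul (Real.hasDerivAt_rpow_const (Or.inl hs.ne'))
    have hmono : MonotoneOn (fun s : ℝ => S.Jfun ψ (ψ + s • (φ - ψ)) * s ^ (-α))
        (Set.Icc t 1) := by
      apply monotoneOn_of_deriv_nonneg (convex_Icc t 1)
      · exact fun s hs => (hd s (h0.trans_le hs.1)).continuousAt.continuousWithinAt
      · intro s hs
        rw [interior_Icc] at hs
        exact (hd s (h0.trans hs.1)).differentiableAt.differentiableWithinAt
      · intro s hs
        rw [interior_Icc] at hs
        have hs0 : 0 < s := h0.trans hs.1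
        rw [(hd s hs0).deriv]
        have hle := MAaux.J_le S (MAaux.segment_mem S hφ hψ ⟨hs0.le, hs.2.le⟩) hψ
        rw [MASetup.Ifun] at hle
        simp only [add_sub_cancel_left, MAaux.cons_smul] at hle
        have hp : s ^ (-α) = s * s ^ (-α - 1) := by
          rw [Real.rpow_sub_one hs0.ne']; field_simp
        rw [hp]
        have hq : 0 < s ^ (-α - 1) := Real.rpow_pos_of_pos hs0 _
        have hα2 : α * ((m : ℝ) + 1) = (m : ℝ) + 2 := by rw [hα]; field_simp; ring
        have key : α * S.Jfun ψ (ψ + s • (φ - ψ)) ≤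
            s * (S.B (Fin.cons (φ - ψ) fun _ => ψ) -
          S.B (Fin.cons (φ - ψ) fun _ => ψ + s • (φ - ψ))) := by
          rw [← hα2] at hle
          refine le_of_mul_le_mul_left ?_ hm
          linarith
        nlinarith [mul_nonneg (sub_nonneg.2 key) hq.le]
    have := hmono ⟨le_rfl, ht.2⟩ ⟨ht.2, le_rfl⟩ ht.2
    simp only [hJ1, Real.one_rpow, mul_one] at this
    rw [Real.rpow_neg h0.le, ← div_eq_mul_inv, div_le_iff₀ (Real.rpow_pos_of_pos h0 _)] at this
    linarith
end

section
/- There exists a constant C > 0 depending only on n such that, for every abstract Monge–Ampère pairing setup (W, B, 𝟙, F) as in the context together with a positivity cone W₊ and a constant D ≥ 0 as in the context, and all ψ, φ₁, φ₂ ∈ F satisfying φ_ref − ψ ∈ W₊, φ_ref − φ₁ ∈ W₊ and φ_ref − φ₂ ∈ W₊ (sup-normalization): |B(ψ − φ_ref, φ₁, …, φ₁) − B(ψ − φ_ref, φ₂, …, φ₂)| ≤ C · I(φ₁, φ₂)^{1/2} · (D + max{J(ψ), J(φ₁), J(φ₂)})^{1/2}, where φᵢ fills the last n slots of B (i.e.,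 |∫(ψ−φ_ref) MA(φ₁) − ∫(ψ−φ_ref) MA(φ₂)| is so bounded). -/
open Finset

section helpers

variable {W : Type*} [AddCommGroup W] [Module ℝ W]

open MASetup

theorem aux_tel {k : ℕ} (f : MultilinearMap ℝ (fun _ : Fin (k + 1) => W) ℝ)
    (hf : ∀ (v : Fin (k + 1) → W) (σ : Equiv.Perm (Fin (k + 1))), f (v ∘ σ) = f v)
    (φ ψ : W) (j : ℕ) (hj : j ≤ k) :
    f (Fin.cons (φ - ψ) (mixVec φ ψ j)) = f (mixVec φ ψ (j + 1)) - f (mixVec φ ψ j) := by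
  have h1 : (mixVec φ ψ (j + 1) : Fin (k + 1) → W) = Fin.cons φ (mixVec φ ψ j) := by
    funext i
    refine Fin.cases ?_ (fun i => ?_) i
    · simp [mixVec]
    · simp [mixVec]
  have h2 : (mixVec φ ψ j : Fin (k + 1) → W) ∘ (Equiv.swap 0 ⟨j, by omega⟩)
      = Fin.cons ψ (mixVec φ ψ j) := by
    funext i
    refine Fin.cases ?_ (fun i => ?_) i
    · simp [mixVec]
    · simp only [Function.comp, Fin.cons_succ]
      by_cases h : i.succ = ⟨j, by omega⟩
      · rw [h, Equiv.swap_apply_right]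
        have : (i : ℕ) + 1 = j := by simpa using congrArg Fin.val h
        have h3 : (i : ℕ) < j := by omega
        have h4 : 0 < j := by omega
        simp [mixVec, h3, h4]
      · rw [Equiv.swap_apply_of_ne_of_ne (Fin.succ_ne_zero i) h]
        have : ¬ (i : ℕ) + 1 = j := fun h' => h (Fin.ext (by simpa using h'))
        simp only [mixVec, Fin.val_succ]
        have : (i : ℕ) + 1 < j ↔ (i : ℕ) < j := by omega
        simp [this]
  rw [← hf (mixVec φ ψ j) (Equiv.swap 0 ⟨j, by omega⟩), h2, h1]
  have := f.cons_add (mixVec φ ψ j) (φ - ψ) ψ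
  rw [sub_add_cancel] at this
  linarith

theorem aux_symm {m : ℕ} (S : MASetup m W) (u : W) (v : Fin (m + 1) → W)
    (σ : Equiv.Perm (Fin (m + 1))) :
    S.B.curryLeft u (v ∘ σ) = S.B.curryLeft u v := by
  simp only [MultilinearMap.curryLeft_apply]
  rw [← S.symm (Fin.cons u v) (Equiv.Perm.decomposeFin.symm (0, σ))]
  congr 1
  funext i
  refine Fin.cases ?_ (fun i => ?_) i
  · simp
  · simp

theorem aux_mem {m : ℕ} (S : MASetup m W) {φ ψ : W} (hφ : φ ∈ S.F) (hψ : ψ ∈ S.F) :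
    φ - ψ ∈ S.W0 :=
  Submodule.subset_span (Or.inl ⟨φ, hφ, ψ, hψ, rfl⟩)

theorem aux_mix {m : ℕ} (S : MASetup m W) {φ ψ : W} (hφ : φ ∈ S.F) (hψ : ψ ∈ S.F) (j k : ℕ)
    (i : Fin k) : mixVec φ ψ j i ∈ S.F := by
  unfold mixVec
  split_ifs <;> assumption

theorem aux_mix_zero (φ ψ : W) (k : ℕ) : (mixVec φ ψ 0 : Fin k → W) = fun _ => ψ := by
  funext i; simp [mixVec]

theorem aux_mix_top (φ ψ : W) (k : ℕ) : (mixVec φ ψ k : Fin k → W) = fun _ => φ := by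
  funext i; simp [mixVec]

/-- One-step telescoping inside the last slots. -/
theorem aux_tel2 {m : ℕ} (S : MASetup m W) (u φ ψ : W) (j : ℕ) (hj : j ≤ m) :
    S.B (Fin.cons u (Fin.cons (φ - ψ) (mixVec φ ψ j))) =
      S.B (Fin.cons u (mixVec φ ψ (j + 1))) - S.B (Fin.cons u (mixVec φ ψ j)) := by
  simpa using aux_tel (S.B.curryLeft u) (aux_symm S u) φ ψ j hj

theorem aux_tel_sum {m : ℕ} (S : MASetup m W) (u φ ψ : W) :
    S.B (Fin.cons u fun _ => φ) - S.B (Fin.cons u fun _ => ψ) =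
      ∑ j ∈ Finset.range (m + 1), S.B (Fin.cons u (Fin.cons (φ - ψ) (mixVec φ ψ j))) := by
  rw [Finset.sum_congr rfl (fun j hj => aux_tel2 S u φ ψ j
    (by have := Finset.mem_range.1 hj; omega)),
    Finset.sum_range_sub (fun j => S.B (Fin.cons u (mixVec φ ψ j))), aux_mix_zero, aux_mix_top]

theorem aux_energy {m : ℕ} (S : MASetup m W) (φ ψ : W) :
    S.energy φ ψ = ((m : ℝ) + 2)⁻¹ * (S.B (fun _ => φ) - S.B (fun _ => ψ)) := by
  unfold energy
  rw [Finset.sum_congr rfl (fun j hj => aux_tel S.B S.symm φ ψ j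
    (by have := Finset.mem_range.1 hj; omega)),
    Finset.sum_range_sub (fun j => S.B (mixVec φ ψ j)), aux_mix_zero, aux_mix_top]

theorem aux_anti {m : ℕ} (S : MASetup m W) {φ ψ : W} (hφ : φ ∈ S.F) (hψ : ψ ∈ S.F) (j : ℕ)
    (hj : j ≤ m + 1) :
    S.B (Fin.cons (φ - ψ) (mixVec φ ψ j)) ≤ S.B (Fin.cons (φ - ψ) fun _ => ψ) := by
  induction j with
  | zero => rw [aux_mix_zero]
  | succ j ih =>
    have h1 := aux_tel2 S (φ - ψ) φ ψ j (by omega)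
    have h2 := S.hodge (φ - ψ) (aux_mem S hφ hψ) (mixVec φ ψ j) (aux_mix S hφ hψ j m)
    have h3 := ih (by omega)
    linarith

theorem aux_I_le_J {m : ℕ} (S : MASetup m W) {φ ψ : W} (hφ : φ ∈ S.F) (hψ : ψ ∈ S.F) :
    S.Ifun φ ψ ≤ ((m : ℝ) + 2) * S.Jfun ψ φ := by
  have hm : ((m : ℝ) + 2) ≠ 0 := by positivity
  unfold Jfun energy Ifun
  rw [mul_sub, mul_inv_cancel_left₀ hm, Finset.sum_range_succ, aux_mix_top]
  have h : ∑ j ∈ Finset.range (m + 1), S.B (Fin.cons (φ - ψ) (mixVec φ ψ j)) ≤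
      ∑ j ∈ Finset.range (m + 1), S.B (Fin.cons (φ - ψ) fun _ => ψ) :=
    Finset.sum_le_sum fun j hj => aux_anti S hφ hψ j
      (by have := Finset.mem_range.1 hj; omega)
  rw [Finset.sum_const, Finset.card_range, nsmul_eq_mul] at h
  push_cast at h
  linarith

theorem aux_I_nonneg {m : ℕ} (S : MASetup m W) {φ ψ : W} (hφ : φ ∈ S.F) (hψ : ψ ∈ S.F) :
    0 ≤ S.Ifun φ ψ := by
  have := aux_anti S hφ hψ (m + 1) le_rfl
  rw [aux_mix_top] at this
  unfold Ifun
  linarith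

theorem aux_concave {m : ℕ} (S : MASetup m W) {φ ψ : W} (hφ : φ ∈ S.F) (hψ : ψ ∈ S.F) :
    S.B (fun _ => φ) - S.B (fun _ => ψ) ≤
      ((m : ℝ) + 2) * S.B (Fin.cons (φ - ψ) fun _ => ψ) := by
  have h := (aux_I_nonneg S hφ hψ).trans (aux_I_le_J S hφ hψ)
  have hm : ((m : ℝ) + 2) ≠ 0 := by positivity
  unfold Jfun at h
  rw [aux_energy, mul_sub, mul_inv_cancel_left₀ hm] at h
  linarith

theorem aux_cs {m : ℕ} (S : MASetup m W) {u v : W} (hu : u ∈ S.W0) (hv : v ∈ S.W0)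
    (g : Fin m → W) (hg : ∀ i, g i ∈ S.F) :
    (S.B (Fin.cons u (Fin.cons v g))) ^ 2 ≤
      (-S.B (Fin.cons u (Fin.cons u g))) * (-S.B (Fin.cons v (Fin.cons v g))) := by
  have hsym : S.B (Fin.cons v (Fin.cons u g)) = S.B (Fin.cons u (Fin.cons v g)) := by
    rw [← S.symm (Fin.cons u (Fin.cons v g)) (Equiv.swap 0 1)]
    congr 1
    funext i
    refine Fin.cases ?_ (fun i => ?_) i
    · simp only [Function.comp, Equiv.swap_apply_left]
      rfl
    · refine Fin.cases ?_ (fun i => ?_) i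
      · simp
      · rw [Function.comp, Equiv.swap_apply_of_ne_of_ne (Fin.succ_ne_zero _)
          (by intro h; exact Fin.succ_ne_zero i (Fin.succ_injective _ h))]
        simp
  have key : ∀ t : ℝ, S.B (Fin.cons v (Fin.cons v g)) * (t * t) +
      2 * S.B (Fin.cons u (Fin.cons v g)) * t + S.B (Fin.cons u (Fin.cons u g)) ≤ 0 := by
    intro t
    have h := S.hodge (u + t • v) (S.W0.add_mem hu (S.W0.smul_mem t hv)) g hg
    have e1 : ∀ x y z : W, S.B (Fin.cons (x + y) (Fin.cons z g)) =
        S.B (Fin.cons x (Fin.cons z g)) + S.B (Fin.cons y (Fin.cons z g)) :=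
      fun x y z => S.B.cons_add _ x y
    have e2 : ∀ x z : W, S.B (Fin.cons (t • x) (Fin.cons z g)) =
        t * S.B (Fin.cons x (Fin.cons z g)) :=
      fun x z => S.B.cons_smul _ t x
    have e3 : ∀ x y z : W, S.B (Fin.cons z (Fin.cons (x + y) g)) =
        S.B (Fin.cons z (Fin.cons x g)) + S.B (Fin.cons z (Fin.cons y g)) :=
      fun x y z => (S.B.curryLeft z).cons_add _ x y
    have e4 : ∀ x z : W, S.B (Fin.cons z (Fin.cons (t • x) g)) =
        t * S.B (Fin.cons z (Fin.cons x g)) :=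
      fun x z => (S.B.curryLeft z).cons_smul _ t x
    rw [e1, e2, e3, e3, e4, e4, hsym] at h
    linarith
  have := discrim_le_zero_of_nonpos key
  unfold discrim at this
  nlinarith

end helpers

/-- there is `C > 0` depending only on `n = m + 1` such that for
every setup, reference `φ_ref ∈ F`, positivity cone `W₊ ⊆ W₀` (on which `B` is
nonnegative against `F`-arguments), constant `D ≥ 0` bounding
`B(φ_ref - φ, φ_ref, …, φ_ref) ≤ D` for sup-normalized `φ ∈ F`, and all
sup-normalized `ψ, φ₁, φ₂ ∈ F`:
`|B(ψ-φ_ref, φ₁,…,φ₁) - B(ψ-φ_ref, φ₂,…,φ₂)| ≤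
  C I(φ₁,φ₂)^{1/2} (D + max{J(ψ), J(φ₁), J(φ₂)})^{1/2}`. -/
theorem MA_measure_holder (m : ℕ) :
    ∃ C : ℝ, 0 < C ∧
      ∀ (W : Type*) [AddCommGroup W] [Module ℝ W] (S : MASetup m W),
        ∀ φref ∈ S.F,
          ∀ Wp : ConvexCone ℝ W, (Wp : Set W) ⊆ (S.W0 : Set W) →
            (∀ u ∈ Wp, ∀ g : Fin (m + 1) → W, (∀ i, g i ∈ S.F) →
              0 ≤ S.B (Fin.cons u g)) →
          ∀ D : ℝ, 0 ≤ D →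
            (∀ φ ∈ S.F, φref - φ ∈ Wp →
              S.B (Fin.cons (φref - φ) fun _ => φref) ≤ D) →
          ∀ ψ ∈ S.F, ∀ φ₁ ∈ S.F, ∀ φ₂ ∈ S.F,
            φref - ψ ∈ Wp → φref - φ₁ ∈ Wp → φref - φ₂ ∈ Wp →
              |S.B (Fin.cons (ψ - φref) fun _ => φ₁) -
                  S.B (Fin.cons (ψ - φref) fun _ => φ₂)| ≤
                C * S.Ifun φ₁ φ₂ ^ ((1 : ℝ) / 2) *
                  (D + max (S.Jfun φref ψ)
                    (max (S.Jfun φref φ₁) (S.Jfun φref φ₂))) ^ ((1 : ℝ) / 2) := by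
  refine ⟨((m : ℝ) + 1) * Real.sqrt (3 ^ (m + 2) * ((m : ℝ) + 2)), by positivity, ?_⟩
  intro W _ _ S φref href Wp hWp hpos D hD hDb ψ hψ φ₁ h₁ φ₂ h₂ pψ p₁ p₂
  set M := max (S.Jfun φref ψ) (max (S.Jfun φref φ₁) (S.Jfun φref φ₂)) with hM
  have hm : (0 : ℝ) < (m : ℝ) + 2 := by positivity
  -- the barycenter
  obtain ⟨φ, hφ⟩ : ∃ φ : W, φ = (1 / 3 : ℝ) • ψ + (1 / 3 : ℝ) • φ₁ + (1 / 3 : ℝ) • φ₂ := ⟨_, rfl⟩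
  have hφ3 : (3 : ℝ) • φ = ψ + φ₁ + φ₂ := by rw [hφ]; module
  have hφF : φ ∈ S.F := by
    have hA := S.Fconv hψ h₁ (a := 1 / 2) (b := 1 / 2) (by norm_num) (by norm_num) (by norm_num)
    have hB := S.Fconv hA h₂ (a := 2 / 3) (b := 1 / 3) (by norm_num) (by norm_num) (by norm_num)
    convert hB using 1
    rw [hφ]; module
  have hφp : φref - φ ∈ Wp := by
    have := Wp.smul_mem (show (0 : ℝ) < 1 / 3 by norm_num)
      (Wp.add_mem (Wp.add_mem pψ p₁) p₂)
    convert this using 1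
    rw [hφ]; module
  have lin : ∀ (a b : W) (g : Fin (m + 1) → W), S.B (Fin.cons (a - b) g) =
      S.B (Fin.cons a g) - S.B (Fin.cons b g) := by
    intro a b g
    have := S.B.cons_add g (a - b) b
    rw [sub_add_cancel] at this
    linarith
  have lin3 : ∀ (g : Fin (m + 1) → W), 3 * S.B (Fin.cons φ g) =
      S.B (Fin.cons ψ g) + S.B (Fin.cons φ₁ g) + S.B (Fin.cons φ₂ g) := by
    intro g
    have h := S.B.cons_smul g 3 φ
    rw [hφ3, S.B.cons_add, S.B.cons_add, smul_eq_mul] at h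
    linarith
  -- convexity of J
  have hJ : S.Jfun φref φ ≤ M := by
    have c0 := aux_concave S hψ hφF
    have c1 := aux_concave S h₁ hφF
    have c2 := aux_concave S h₂ hφF
    rw [lin] at c0 c1 c2
    have l1 := lin3 (fun _ => φ)
    have l2 := lin3 (fun _ => φref)
    have hQ : S.B (fun _ => ψ) + S.B (fun _ => φ₁) + S.B (fun _ => φ₂) ≤
        3 * S.B (fun _ => φ) := by
      have : ((m : ℝ) + 2) * (3 * S.B (Fin.cons φ fun _ => φ)) = ((m : ℝ) + 2) *
        (S.B (Fin.cons ψ fun _ => φ) + S.B (Fin.cons φ₁ fun _ => φ) +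
          S.B (Fin.cons φ₂ fun _ => φ)) := by rw [l1]
      linarith
    have hQ' := mul_le_mul_of_nonneg_left hQ (inv_nonneg.2 hm.le)
    have m0 : S.Jfun φref ψ ≤ M := le_max_left _ _
    have m1 : S.Jfun φref φ₁ ≤ M := (le_max_left _ _).trans (le_max_right _ _)
    have m2 : S.Jfun φref φ₂ ≤ M := (le_max_right _ _).trans (le_max_right _ _)
    unfold MASetup.Jfun at m0 m1 m2 ⊢
    rw [aux_energy, lin] at m0 m1 m2 ⊢
    linarith
  have hM0 : 0 ≤ M := by
    have h := (aux_I_nonneg S hφF href).trans (aux_I_le_J S hφF href)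
    exact (nonneg_of_mul_nonneg_right h hm).trans hJ
  have hK : S.B (Fin.cons (φref - φ) fun _ => φ) ≤ ((m : ℝ) + 2) * (D + M) := by
    have a1 := aux_I_le_J S hφF href
    have a2 := hDb φ hφF hφp
    have a3 := mul_le_mul_of_nonneg_left hJ hm.le
    unfold MASetup.Ifun at a1
    rw [lin, lin] at a1
    rw [lin] at a2 ⊢
    have : 0 ≤ ((m : ℝ) + 1) * D := by positivity
    linarith
  -- positivity expansion
  have hexp : ∀ j : ℕ, S.B (Fin.cons (φref - ψ) (Fin.cons ψ (MASetup.mixVec φ₁ φ₂ j))) ≤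
      3 ^ (m + 2) * S.B (Fin.cons (φref - φ) fun _ => φ) := by
    intro j
    let x : Fin 3 → W := ![ψ, φ₁, φ₂]
    have hx : ∀ k, x k ∈ S.F := by
      intro k; fin_cases k <;> simpa [x]
    have hxp : ∀ k, φref - x k ∈ Wp := by
      intro k; fin_cases k <;> simpa [x]
    let G : Fin (m + 2) → Fin 3 → W := Fin.cons (fun k => φref - x k) (fun _ => x)
    have hs := S.B.map_sum G
    have hl : (fun i => ∑ k, G i k) = fun i => (3 : ℝ) •
        (Fin.cons (φref - φ) (fun _ => φ) : Fin (m + 2) → W) i := by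
      funext i
      refine Fin.cases ?_ (fun i => ?_) i
      · simp only [G, x, Fin.cons_zero, Fin.sum_univ_three, smul_sub, hφ3]
        simp
        module
      · simp only [G, x, Fin.cons_succ, Fin.sum_univ_three, hφ3]
        simp
    rw [hl, S.B.map_smul_univ (fun _ => (3 : ℝ))] at hs
    simp only [Finset.prod_const, Finset.card_univ, Fintype.card_fin, smul_eq_mul] at hs
    rw [hs]
    have hterm : ∀ r : Fin (m + 2) → Fin 3, (fun i => G i (r i)) =
        (Fin.cons (φref - x (r 0)) (fun i => x (r i.succ)) : Fin (m + 2) → W) := by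
      intro r
      funext i
      refine Fin.cases ?_ (fun i => ?_) i
      · simp [G]
      · simp [G]
    let r0 : Fin (m + 2) → Fin 3 :=
      Fin.cons 0 (Fin.cons 0 (fun i : Fin m => if (i : ℕ) < j then 1 else 2))
    have hr0 : (fun i => G i (r0 i)) =
        Fin.cons (φref - ψ) (Fin.cons ψ (MASetup.mixVec φ₁ φ₂ j)) := by
      rw [hterm]
      congr 1
      funext i
      refine Fin.cases ?_ (fun i => ?_) i
      · simp [r0, x]
      · simp only [r0, x, Fin.cons_succ, MASetup.mixVec]
        split_ifs <;> simp
    rw [← hr0]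
    refine Finset.single_le_sum (f := fun r : Fin (m + 2) → Fin 3 => S.B (fun i => G i (r i)))
      (fun r _ => ?_) (Finset.mem_univ r0)
    show 0 ≤ S.B (fun i => G i (r i))
    rw [hterm]
    exact hpos _ (hxp _) _ (fun i => hx _)
  have hI0 := aux_I_nonneg S h₁ h₂
  set K : ℝ := 3 ^ (m + 2) * ((m : ℝ) + 2) with hKdef
  have hK0 : 0 ≤ K := by positivity
  have hterm : ∀ j ∈ Finset.range (m + 1),
      |S.B (Fin.cons (ψ - φref) (Fin.cons (φ₁ - φ₂) (MASetup.mixVec φ₁ φ₂ j)))| ≤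
        Real.sqrt (K * (D + M) * S.Ifun φ₁ φ₂) := by
    intro j hj
    apply Real.abs_le_sqrt
    have hg := aux_mix S h₁ h₂ j m
    refine (aux_cs S (aux_mem S hψ href) (aux_mem S h₁ h₂) _ hg).trans ?_
    have hv : -S.B (Fin.cons (φ₁ - φ₂) (Fin.cons (φ₁ - φ₂) (MASetup.mixVec φ₁ φ₂ j))) ≤
        S.Ifun φ₁ φ₂ := by
      have hs := aux_tel_sum S (φ₁ - φ₂) φ₁ φ₂
      have := Finset.single_le_sum (s := Finset.range (m + 1))
        (f := fun j => -S.B (Fin.cons (φ₁ - φ₂) (Fin.cons (φ₁ - φ₂) (MASetup.mixVec φ₁ φ₂ j))))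
        (fun i _ => neg_nonneg.2 (S.hodge _ (aux_mem S h₁ h₂) _ (aux_mix S h₁ h₂ i m))) hj
      rw [Finset.sum_neg_distrib, ← hs] at this
      unfold MASetup.Ifun
      linarith
    have hv0 := neg_nonneg.2 (S.hodge _ (aux_mem S h₁ h₂) _ hg)
    have hu : -S.B (Fin.cons (ψ - φref) (Fin.cons (ψ - φref) (MASetup.mixVec φ₁ φ₂ j))) ≤
        K * (D + M) := by
      have e := (S.B.curryLeft (φref - ψ)).cons_add (MASetup.mixVec φ₁ φ₂ j) (ψ - φref) φref
      rw [sub_add_cancel] at e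
      simp only [MultilinearMap.curryLeft_apply] at e
      have e1 := hpos _ pψ (Fin.cons φref (MASetup.mixVec φ₁ φ₂ j))
        (fun i => by
          refine Fin.cases ?_ (fun i => ?_) i
          · simpa using href
          · simpa using hg i)
      have e2 := hexp j
      have e3 := mul_le_mul_of_nonneg_left hK (show (0 : ℝ) ≤ 3 ^ (m + 2) by positivity)
      have e4 : S.B (Fin.cons (ψ - φref) (Fin.cons (ψ - φref) (MASetup.mixVec φ₁ φ₂ j))) =
          -S.B (Fin.cons (φref - ψ) (Fin.cons (ψ - φref) (MASetup.mixVec φ₁ φ₂ j))) := by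
        rw [lin ψ φref, lin φref ψ]; ring
      rw [e4, hKdef, mul_assoc]
      linarith
    exact mul_le_mul hu hv hv0 (by positivity)
  have hfin : |S.B (Fin.cons (ψ - φref) fun _ => φ₁) -
      S.B (Fin.cons (ψ - φref) fun _ => φ₂)| ≤
      ((m : ℝ) + 1) * Real.sqrt (K * (D + M) * S.Ifun φ₁ φ₂) := by
    rw [aux_tel_sum]
    refine (Finset.abs_sum_le_sum_abs _ _).trans ((Finset.sum_le_sum hterm).trans ?_)
    simp
  refine hfin.trans (le_of_eq ?_)
  rw [← Real.sqrt_eq_rpow, ← Real.sqrt_eq_rpow, Real.sqrt_mul (by positivity),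
    Real.sqrt_mul hK0]
  ring
end
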